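/- arXiv:1106.4273 — 3 statements merged into one kernel-verified Lean document; each statement's English description precedes it below -/
import Mathlib

section
/- Let μ denote the Haar probability measure on 2^ω and let E_I be the summable-difference equivalence relation on 2^ω. For every Borel set A ⊆ 2^ω with μ(A) > 0, E_I is Borel reducible to the restriction E_I ↾ A; in fact, there is a continuous map g : 2^ω → 2^ω such that g(x) ∈ A for every x ∈ 2^ω and, for all x, y ∈ 2^ω, x E_I y holds if and only if g(x) E_I g(y) holds. -/
open MeasureTheory
open scoped ENNReal

/-- The Cantor space `2^ω`, identified with the compact group `(ℤ/2ℤ)^ω`. -/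
abbrev Cantor : Type := ℕ → ZMod 2

/-- The sum `Σ_n |x(n) - y(n)|/(n+1)` (computed in `[0,∞]`). -/
noncomputable def eiSum (x y : Cantor) : ℝ≥0∞ :=
  ∑' n : ℕ, if x n = y n then 0 else 1 / ((n : ℝ≥0∞) + 1)

/-- The summable-difference equivalence relation `E_I`:
`x E_I y` iff `Σ_n |x(n)-y(n)|/(n+1) < ∞`. -/
def EI (x y : Cantor) : Prop := eiSum x y < ⊤

/-!
Bit `n` of `x` is coded in the `n`-th of a sequence of blocks of coordinates: flipping a fixed
subset `T n` of that block, of total weight close to `1 / (n + 1)`, turns the code of `0` into the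
code of `1`. To land in a closed set `K ⊆ A` of positive measure the codes have to be corrected,
at a finite total cost. The blocks are placed so far out that the squares of the weights in each
of them have a tiny sum. By the Efron–Stein inequality the weighted Hamming distance to a set of
not too small density then has tiny variance, and as it vanishes on that set it has tiny mean.
Hence a single word `z` works for all `2 ^ (n + 1)` initial segments at once: both `z` and its
flip on `T n` are close to continuations into `K`. By Markov's inequality the continuations can be
chosen to keep half of the conditional density of `K`.
-/

section WeightedDifferences

variable {ι α : Type*} [DecidableEq α] {w : ι → ℝ} {s : Finset ι}

/-- The weight `w i` charged at the coordinates where `x` and `y` differ; it is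
`w i * |x i - y i|` when the coordinates are bits. -/
def diffWeight (w : ι → ℝ) (x y : ι → α) (i : ι) : ℝ := if x i = y i then 0 else w i

/-- The summable-difference relation with weights `w`; `E_I` is the case `w n = 1 / (n + 1)`. -/
def SummableDiff (w : ι → ℝ) (x y : ι → α) : Prop := Summable (diffWeight w x y)

/-- The Hamming distance over the finite set `s` of coordinates, with weights `w`. -/
def hammingSum (w : ι → ℝ) (s : Finset ι) (x y : ι → α) : ℝ := ∑ i ∈ s, diffWeight w x y i

/-- The weighted Hamming distance from `x` to the set `S`, equal to `0` if `S` is empty. -/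
noncomputable def infHamming (w : ι → ℝ) (s : Finset ι) (S : Set (ι → α)) (x : ι → α) : ℝ :=
  ⨅ y : S, hammingSum w s x y

theorem diffWeight_nonneg (hw : ∀ i, 0 ≤ w i) (x y : ι → α) (i : ι) : 0 ≤ diffWeight w x y i := by
  unfold diffWeight
  split_ifs
  exacts [le_rfl, hw i]

theorem ei_iff_summableDiff (x y : Cantor) :
    EI x y ↔ SummableDiff (fun n : ℕ => 1 / ((n : ℝ) + 1)) x y := by
  have hterm (n : ℕ) : (if x n = y n then (0 : ℝ≥0∞) else 1 / ((n : ℝ≥0∞) + 1)) =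
      ENNReal.ofReal (diffWeight (fun n : ℕ => 1 / ((n : ℝ) + 1)) x y n) := by
    unfold diffWeight
    split_ifs
    · exact ENNReal.ofReal_zero.symm
    · rw [ENNReal.ofReal_div_of_pos (by positivity), ENNReal.ofReal_one,
        ENNReal.ofReal_add (by positivity) zero_le_one, ENNReal.ofReal_natCast, ENNReal.ofReal_one]
  have hnonneg := diffWeight_nonneg (w := fun n : ℕ => 1 / ((n : ℝ) + 1))
    (fun _ => by positivity) x y
  simp only [EI, eiSum, hterm, SummableDiff]
  refine ⟨fun h => ?_, fun h => h.tsum_ofReal_lt_top⟩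
  simpa only [ENNReal.toReal_ofReal (hnonneg _)] using ENNReal.summable_toReal h.ne

theorem hammingSum_nonneg (hw : ∀ i, 0 ≤ w i) (x y : ι → α) : 0 ≤ hammingSum w s x y :=
  Finset.sum_nonneg fun i _ => diffWeight_nonneg hw x y i

theorem hammingSum_self (x : ι → α) : hammingSum w s x x = 0 := by
  simp [hammingSum, diffWeight]

theorem hammingSum_comm (x y : ι → α) : hammingSum w s x y = hammingSum w s y x := by
  simp only [hammingSum, diffWeight, eq_comm]

theorem hammingSum_congr {x x' y y' : ι → α} (hx : ∀ i ∈ s, x i = x' i)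
    (hy : ∀ i ∈ s, y i = y' i) : hammingSum w s x y = hammingSum w s x' y' :=
  Finset.sum_congr rfl fun i hi => by simp only [diffWeight, hx i hi, hy i hi]

theorem hammingSum_triangle (hw : ∀ i, 0 ≤ w i) (x y z : ι → α) :
    hammingSum w s x z ≤ hammingSum w s x y + hammingSum w s y z := by
  simp only [hammingSum, ← Finset.sum_add_distrib]
  refine Finset.sum_le_sum fun i _ => ?_
  have := hw i
  unfold diffWeight
  split_ifs <;> first | linarith | simp_all

theorem abs_hammingSum_sub_hammingSum_le (hw : ∀ i, 0 ≤ w i) (x x' y y' : ι → α) :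
    |hammingSum w s x x' - hammingSum w s y y'| ≤ hammingSum w s x y + hammingSum w s x' y' := by
  have hxx' := hammingSum_triangle (s := s) hw x y x'
  have hyx' := hammingSum_triangle (s := s) hw y y' x'
  have hyy' := hammingSum_triangle (s := s) hw y x y'
  have hxy' := hammingSum_triangle (s := s) hw x x' y'
  rw [hammingSum_comm y' x'] at hyx'
  rw [hammingSum_comm y x] at hyy'
  rw [abs_le]
  constructor <;> linarith

theorem hammingSum_add_single_le [DecidableEq ι] (hw : ∀ i, 0 ≤ w i) (x : ι → ZMod 2) (i : ι) :
    hammingSum w s x (x + Pi.single i 1) ≤ w i := by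
  calc hammingSum w s x (x + Pi.single i 1)
      ≤ ∑ j ∈ s, if i = j then w j else 0 := by
        refine Finset.sum_le_sum fun j _ => ?_
        by_cases hij : i = j
        · subst hij; simp [diffWeight]
        · simp [diffWeight, hij, Ne.symm hij]
    _ ≤ w i := by
        rw [Finset.sum_ite_eq]
        split_ifs
        exacts [le_rfl, hw i]

theorem hammingSum_smul_indicator_add {T : Finset ι} (hT : T ⊆ s) (z : ι → ZMod 2)
    (k l : ZMod 2) :
    hammingSum w s (k • (T : Set ι).indicator 1 + z) (l • (T : Set ι).indicator 1 + z) =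
      if k = l then 0 else ∑ i ∈ T, w i := by
  classical
  split_ifs with hkl
  · rw [hkl, hammingSum_self]
  · refine (Finset.sum_subset_zero_on_sdiff hT (fun i hi => ?_) fun i hi => ?_).symm
    · simp [diffWeight, (Finset.mem_sdiff.1 hi).2]
    · simp [diffWeight, hi, hkl]

theorem bddBelow_range_hammingSum (hw : ∀ i, 0 ≤ w i) (S : Set (ι → α)) (x : ι → α) :
    BddBelow (Set.range fun y : S => hammingSum w s x y) :=
  ⟨0, Set.forall_mem_range.2 fun y => hammingSum_nonneg hw x y⟩

theorem infHamming_nonneg (hw : ∀ i, 0 ≤ w i) (S : Set (ι → α)) (x : ι → α) :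
    0 ≤ infHamming w s S x :=
  Real.iInf_nonneg fun y => hammingSum_nonneg hw x y

theorem infHamming_of_mem (hw : ∀ i, 0 ≤ w i) {S : Set (ι → α)} {x : ι → α} (hx : x ∈ S) :
    infHamming w s S x = 0 :=
  le_antisymm
    ((ciInf_le (bddBelow_range_hammingSum hw S x) ⟨x, hx⟩).trans_eq (hammingSum_self x))
    (infHamming_nonneg hw S x)

theorem infHamming_le_infHamming_add (hw : ∀ i, 0 ≤ w i) {S : Set (ι → α)} (hS : S.Nonempty)
    (x y : ι → α) : infHamming w s S x ≤ infHamming w s S y + hammingSum w s x y := by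
  have := hS.to_subtype
  rw [← sub_le_iff_le_add]
  refine le_ciInf fun z => sub_le_iff_le_add'.2 ?_
  exact (ciInf_le (bddBelow_range_hammingSum hw S x) z).trans (hammingSum_triangle hw x y z)

theorem abs_infHamming_sub_le (hw : ∀ i, 0 ≤ w i) {S : Set (ι → α)} (hS : S.Nonempty)
    (x y : ι → α) : |infHamming w s S x - infHamming w s S y| ≤ hammingSum w s x y := by
  have hxy := infHamming_le_infHamming_add (s := s) hw hS x y
  have hyx := infHamming_le_infHamming_add (s := s) hw hS y x
  rw [hammingSum_comm] at hyx
  rw [abs_le]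
  constructor <;> linarith

end WeightedDifferences

section CubeAverages

open scoped BigOperators

variable {ι : Type*} {s : Finset ι} {F G : (ι → ZMod 2) → ℝ}

/-- The average of `F` over the `2 ^ #s` points obtained from `x` by flipping the coordinates in
some subset of `s`, i.e. the conditional expectation of `F` given the coordinates outside `s`. -/
noncomputable def flipAvg (s : Finset ι) (F : (ι → ZMod 2) → ℝ) (x : ι → ZMod 2) : ℝ :=
  𝔼 t ∈ s.powerset, F (x + (t : Set ι).indicator 1)

theorem flipAvg_empty (F : (ι → ZMod 2) → ℝ) (x : ι → ZMod 2) : flipAvg ∅ F x = F x := by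
  rw [flipAvg, Finset.powerset_empty, Finset.expect_singleton, Finset.coe_empty,
    Set.indicator_empty', add_zero]

theorem flipAvg_insert [DecidableEq ι] {i : ι} (hi : i ∉ s) (F : (ι → ZMod 2) → ℝ)
    (x : ι → ZMod 2) :
    flipAvg (insert i s) F x = flipAvg s (fun u => (F u + F (u + Pi.single i 1)) / 2) x := by
  have hflip : ∀ t ∈ s.powerset, F (x + ((insert i t : Finset ι) : Set ι).indicator 1) =
      F (x + (t : Set ι).indicator 1 + Pi.single i 1) := by
    intro t ht
    have hit : i ∉ t := fun h => hi (Finset.mem_powerset.1 ht h)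
    congr 1
    funext j
    by_cases hj : j = i
    · subst hj; simp [hit]
    · simp [Set.indicator_apply, hj]
  simp only [flipAvg, Finset.expect_eq_sum_div_card, Finset.card_powerset,
    Finset.card_insert_of_notMem hi, Finset.sum_powerset_insert hi, Finset.sum_congr rfl hflip]
  rw [← Finset.sum_div, Finset.sum_add_distrib, pow_succ']
  push_cast
  rw [div_div]

theorem flipAvg_mono (h : ∀ u, F u ≤ G u) (x : ι → ZMod 2) : flipAvg s F x ≤ flipAvg s G x :=
  Finset.expect_le_expect fun _ _ => h _

theorem flipAvg_add_const (F : (ι → ZMod 2) → ℝ) (c : ℝ) (x : ι → ZMod 2) :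
    flipAvg s (fun u => F u + c) x = flipAvg s F x + c := by
  rw [flipAvg, Finset.expect_add_distrib, Finset.expect_const s.powerset_nonempty, flipAvg]

theorem flipAvg_sq_le [DecidableEq ι] {c : ι → ℝ}
    (hF : ∀ i ∈ s, ∀ u, |F u - F (u + Pi.single i 1)| ≤ c i)
    (x : ι → ZMod 2) :
    flipAvg s (fun u => F u ^ 2) x ≤ flipAvg s F x ^ 2 + (∑ i ∈ s, c i ^ 2) / 4 := by
  induction s using Finset.induction_on generalizing F with
  | empty => simp [flipAvg_empty]
  | insert i s hi ih =>
    set G : (ι → ZMod 2) → ℝ := fun u => (F u + F (u + Pi.single i 1)) / 2 with hG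
    have hGdiff : ∀ j ∈ s, ∀ u, |G u - G (u + Pi.single j 1)| ≤ c j := by
      intro j hj u
      have h₁ := abs_le.1 (hF j (Finset.mem_insert_of_mem hj) u)
      have h₂ := abs_le.1 (hF j (Finset.mem_insert_of_mem hj) (u + Pi.single i 1))
      simp only [hG, add_right_comm u (Pi.single j 1)]
      rw [abs_le]
      constructor <;> linarith [h₁.1, h₁.2, h₂.1, h₂.2]
    -- `(a² + b²) / 2 = ((a + b) / 2)² + (a - b)² / 4`
    have hpair (u) : (F u ^ 2 + F (u + Pi.single i 1) ^ 2) / 2 ≤ G u ^ 2 + c i ^ 2 / 4 := by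
      have := sq_le_sq.2 ((hF i (Finset.mem_insert_self i s) u).trans (le_abs_self _))
      simp only [hG]
      linarith
    calc flipAvg (insert i s) (fun u => F u ^ 2) x
        = flipAvg s (fun u => (F u ^ 2 + F (u + Pi.single i 1) ^ 2) / 2) x :=
          flipAvg_insert hi _ x
      _ ≤ flipAvg s (fun u => G u ^ 2) x + c i ^ 2 / 4 :=
          (flipAvg_mono hpair x).trans_eq (flipAvg_add_const _ _ x)
      _ ≤ flipAvg s G x ^ 2 + (∑ j ∈ s, c j ^ 2) / 4 + c i ^ 2 / 4 := by gcongr; exact ih hGdiff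
      _ = flipAvg (insert i s) F x ^ 2 + (∑ j ∈ insert i s, c j ^ 2) / 4 := by
          rw [flipAvg_insert hi, Finset.sum_insert hi]
          ring

/-- The Efron–Stein inequality. -/
theorem flipAvg_sub_flipAvg_sq_le [DecidableEq ι] {c : ι → ℝ}
    (hF : ∀ i ∈ s, ∀ u, |F u - F (u + Pi.single i 1)| ≤ c i) (x : ι → ZMod 2) :
    flipAvg s (fun u => (F u - flipAvg s F x) ^ 2) x ≤ (∑ i ∈ s, c i ^ 2) / 4 := by
  have hmean : flipAvg s (fun u => F u - flipAvg s F x) x = 0 := by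
    simp only [sub_eq_add_neg]
    rw [flipAvg_add_const, add_neg_cancel]
  have hsq := flipAvg_sq_le (F := fun u => F u - flipAvg s F x)
    (fun i hi u => by simpa using hF i hi u) x
  rwa [hmean, zero_pow two_ne_zero, zero_add] at hsq

theorem flipAvg_le_flipAvg_indicator_add (hF : ∀ u, F u ≤ 1) {θ : ℝ} (hθ : 0 ≤ θ)
    (x : ι → ZMod 2) : flipAvg s F x ≤ flipAvg s ({u | θ ≤ F u}.indicator 1) x + θ := by
  rw [← flipAvg_add_const]
  refine flipAvg_mono (fun u => ?_) x
  by_cases hu : θ ≤ F u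
  · simpa [hu] using (hF u).trans (le_add_of_nonneg_right hθ)
  · simpa [hu] using (not_le.1 hu).le

theorem nonempty_of_flipAvg_indicator_pos {S : Set (ι → ZMod 2)} {x : ι → ZMod 2}
    (h : 0 < flipAvg s (S.indicator 1) x) : S.Nonempty := by
  rw [Set.nonempty_iff_ne_empty]
  rintro rfl
  simp [flipAvg] at h

theorem sq_flipAvg_infHamming_mul_le {w : ι → ℝ} (hw : ∀ i, 0 ≤ w i) {S : Set (ι → ZMod 2)}
    (hS : S.Nonempty) (x : ι → ZMod 2) :
    flipAvg s (infHamming w s S) x ^ 2 * flipAvg s (S.indicator 1) x ≤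
      (∑ i ∈ s, w i ^ 2) / 4 := by
  classical
  set M := flipAvg s (infHamming w s S) x
  -- The distance vanishes on `S`, so there it deviates from its mean `M` by `M`.
  have hdev (u) : M ^ 2 * S.indicator 1 u ≤ (infHamming w s S u - M) ^ 2 := by
    by_cases hu : u ∈ S
    · simp [hu, infHamming_of_mem hw hu]
    · simpa [hu] using sq_nonneg _
  calc M ^ 2 * flipAvg s (S.indicator 1) x
      = flipAvg s (fun u => M ^ 2 * S.indicator 1 u) x := Finset.mul_expect _ _ _
    _ ≤ flipAvg s (fun u => (infHamming w s S u - M) ^ 2) x := flipAvg_mono hdev x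
    _ ≤ (∑ i ∈ s, w i ^ 2) / 4 := flipAvg_sub_flipAvg_sq_le (fun i _ u =>
        (abs_infHamming_sub_le hw hS u _).trans (hammingSum_add_single_le hw u i)) x

theorem flipAvg_infHamming_lt {w : ι → ℝ} (hw : ∀ i, 0 ≤ w i) {S : Set (ι → ZMod 2)} {δ ε : ℝ}
    (hδ : 0 < δ) (hε : 0 ≤ ε) {x : ι → ZMod 2} (hS : δ ≤ flipAvg s (S.indicator 1) x)
    (hsmall : ∑ i ∈ s, w i ^ 2 < 4 * δ * ε ^ 2) : flipAvg s (infHamming w s S) x < ε := by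
  have hsq := sq_flipAvg_infHamming_mul_le (s := s) hw
    (nonempty_of_flipAvg_indicator_pos (hδ.trans_le hS)) x
  have hδle := mul_le_mul_of_nonneg_left hS (sq_nonneg (flipAvg s (infHamming w s S) x))
  refine lt_of_pow_lt_pow_left₀ 2 hε (lt_of_mul_lt_mul_right ?_ hδ.le)
  linarith

theorem exists_forall_infHamming_add_lt {w : ι → ℝ} (hw : ∀ i, 0 ≤ w i) {κ : Type*} [Fintype κ]
    [Nonempty κ] {S : κ → Set (ι → ZMod 2)} {δ ε : ℝ} (hδ : 0 < δ) (hε : 0 ≤ ε)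
    (hS : ∀ k x, δ ≤ flipAvg s ((S k).indicator 1) x)
    (hsmall : (Fintype.card κ : ℝ) ^ 2 * ∑ i ∈ s, w i ^ 2 < 4 * δ * ε ^ 2) (c : κ → ι → ZMod 2) :
    ∃ z, ∀ k, infHamming w s (S k) (c k + z) < ε := by
  have hcard : (0 : ℝ) < Fintype.card κ := by exact_mod_cast Fintype.card_pos
  have hmean (k) : flipAvg s (infHamming w s (S k)) (c k) < ε / Fintype.card κ := by
    refine flipAvg_infHamming_lt hw hδ (by positivity) (hS k (c k)) ?_
    rw [div_pow, ← mul_div_assoc, lt_div_iff₀ (by positivity)]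
    linarith
  have hsum : 𝔼 t ∈ s.powerset, ∑ k, infHamming w s (S k) (c k + (t : Set ι).indicator 1) < ε :=
    calc _ = ∑ k, flipAvg s (infHamming w s (S k)) (c k) := Finset.expect_sum_comm _ _ _
      _ < ∑ _k : κ, ε / Fintype.card κ :=
          Finset.sum_lt_sum_of_nonempty Finset.univ_nonempty fun k _ => hmean k
      _ = ε := by
          rw [Finset.sum_const, Finset.card_univ, nsmul_eq_mul, mul_div_cancel₀ _ hcard.ne']
  obtain ⟨t, -, ht⟩ := Finset.exists_lt_of_expect_lt s.powerset_nonempty hsum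
  exact ⟨(t : Set ι).indicator 1, fun k => (Finset.single_le_sum
    (f := fun k => infHamming w s (S k) (c k + (t : Set ι).indicator 1))
    (fun j _ => infHamming_nonneg hw _ _) (Finset.mem_univ k)).trans_lt ht⟩

end CubeAverages

section Density

variable {μ : Measure Cantor} {K : Set Cantor}

/-- The conditional probability of `K` given that the first `n` coordinates agree with those
of `x`, equal to `0` if that event is null. -/
noncomputable def density (μ : Measure Cantor) (K : Set Cantor) (x : Cantor) (n : ℕ) : ℝ :=
  μ.real (K ∩ PiNat.cylinder x n) / μ.real (PiNat.cylinder x n)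

theorem density_congr {x y : Cantor} {n : ℕ} (h : y ∈ PiNat.cylinder x n) :
    density μ K y n = density μ K x n := by
  rw [density, PiNat.mem_cylinder_iff_eq.1 h, density]

theorem nonempty_of_density_pos {x : Cantor} {n : ℕ} (h : 0 < density μ K x n) :
    (K ∩ PiNat.cylinder x n).Nonempty := by
  rw [Set.nonempty_iff_ne_empty]
  intro hempty
  simp [density, hempty] at h

theorem density_zero_pos [IsFiniteMeasure μ] (hK : 0 < μ K) (x : Cantor) :
    0 < density μ K x 0 := by
  have hKuniv := hK.trans_le (measure_mono (Set.subset_univ K))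
  rw [density, PiNat.cylinder_zero, Set.inter_univ]
  exact div_pos (ENNReal.toReal_pos hK.ne' (measure_ne_top μ _))
    (ENNReal.toReal_pos hKuniv.ne' (measure_ne_top μ _))

theorem density_le_one [IsFiniteMeasure μ] (x : Cantor) (n : ℕ) : density μ K x n ≤ 1 :=
  div_le_one_of_le₀ (measureReal_mono Set.inter_subset_right) measureReal_nonneg

theorem cylinder_diff_cylinder_succ (x : Cantor) (n : ℕ) :
    PiNat.cylinder x n \ PiNat.cylinder x (n + 1) = PiNat.cylinder (x + Pi.single n 1) (n + 1) := by
  have hbit (a b : ZMod 2) : ¬ b = a ↔ b = a + 1 := by decide +revert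
  ext y
  have hbelow : (∀ i < n, y i = x i + (Pi.single n 1 : Cantor) i) ↔ ∀ i < n, y i = x i :=
    forall₂_congr fun i hi => by simp [hi.ne]
  simp only [Set.mem_sdiff, PiNat.mem_cylinder_iff, Nat.forall_lt_succ_right, Pi.add_apply,
    hbelow, Pi.single_eq_same, ← hbit]
  tauto

theorem measureReal_inter_cylinder [IsFiniteMeasure μ] (K : Set Cantor) (x : Cantor) (n : ℕ) :
    μ.real (K ∩ PiNat.cylinder x n) = μ.real (K ∩ PiNat.cylinder x (n + 1)) +
      μ.real (K ∩ PiNat.cylinder (x + Pi.single n 1) (n + 1)) := by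
  rw [← cylinder_diff_cylinder_succ, ← Set.inter_sdiff_assoc,
    ← measureReal_inter_add_sdiff (s := K ∩ PiNat.cylinder x n)
      (PiNat.isOpen_cylinder _ x (n + 1)).measurableSet,
    Set.inter_assoc, Set.inter_eq_self_of_subset_right (PiNat.cylinder_anti x n.le_succ)]

theorem measureReal_cylinder_add [μ.IsAddLeftInvariant] (x c : Cantor) (n : ℕ) :
    μ.real (PiNat.cylinder (x + c) n) = μ.real (PiNat.cylinder x n) := by
  rw [measureReal_def, ← measure_preimage_add μ c, measureReal_def]
  congr 2
  ext y
  simp only [Set.mem_preimage, PiNat.mem_cylinder_iff, Pi.add_apply, add_comm (x _), add_right_inj]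

variable [IsFiniteMeasure μ] [μ.IsAddLeftInvariant]

theorem density_eq_average (x : Cantor) (n : ℕ) :
    density μ K x n =
      (density μ K x (n + 1) + density μ K (x + Pi.single n 1) (n + 1)) / 2 := by
  have hcyl := measureReal_inter_cylinder (μ := μ) Set.univ x n
  simp only [Set.univ_inter, measureReal_cylinder_add] at hcyl
  rw [density, density, density, measureReal_inter_cylinder, hcyl, measureReal_cylinder_add]
  ring

theorem flipAvg_density {a b : ℕ} (hab : a ≤ b) (p x : Cantor) :
    flipAvg (Finset.Ico a b) (fun u => density μ K ((Finset.range a).piecewise p u) b) x =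
      density μ K p a := by
  induction b, hab using Nat.le_induction with
  | base =>
    rw [Finset.Ico_self, flipAvg_empty]
    exact density_congr fun i hi => Finset.piecewise_eq_of_mem _ _ _ (Finset.mem_range.2 hi)
  | succ b hab ih =>
    have hflip (u : Cantor) : (Finset.range a).piecewise p (u + Pi.single b 1) =
        (Finset.range a).piecewise p u + Pi.single b 1 := by
      funext i
      by_cases hi : i < a
      · simp [Finset.piecewise, hi, (hi.trans_le hab).ne]
      · simp [Finset.piecewise, hi]
    rw [← Finset.insert_Ico_right_eq_Ico_add_one hab, flipAvg_insert (by simp), ← ih]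
    simp only [hflip, density_eq_average _ b]

theorem exists_density_le {a b : ℕ} (hab : a ≤ b) (p : Cantor) :
    ∃ q, density μ K p a ≤ density μ K q b := by
  obtain ⟨t, -, ht⟩ := Finset.exists_le_of_le_expect (Finset.powerset_nonempty _)
    (flipAvg_density (μ := μ) (K := K) hab p 0).ge
  exact ⟨_, ht⟩

theorem exists_extensions_near {w : ℕ → ℝ} (hw : ∀ i, 0 ≤ w i) {κ : Type*} [Fintype κ]
    [Nonempty κ] {a b : ℕ} (hab : a ≤ b) {δ ε : ℝ} (hδ : 0 < δ) (hε : 0 ≤ ε) {p : κ → Cantor}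
    (hp : ∀ k, δ ≤ density μ K (p k) a)
    (hsmall : (Fintype.card κ : ℝ) ^ 2 * ∑ i ∈ Finset.Ico a b, w i ^ 2 < 2 * δ * ε ^ 2)
    (c : κ → Cantor) :
    ∃ z, ∀ k, ∃ q ∈ PiNat.cylinder (p k) a, δ / 2 ≤ density μ K q b ∧
      hammingSum w (Finset.Ico a b) (c k + z) q < ε := by
  set S : κ → Set Cantor :=
    fun k => {u | δ / 2 ≤ density μ K ((Finset.range a).piecewise (p k) u) b}
  have hS (k x) : δ / 2 ≤ flipAvg (Finset.Ico a b) ((S k).indicator 1) x := by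
    have hmarkov := flipAvg_le_flipAvg_indicator_add (s := Finset.Ico a b)
      (fun u => density_le_one (μ := μ) (K := K) ((Finset.range a).piecewise (p k) u) b)
      (half_pos hδ).le x
    rw [flipAvg_density hab] at hmarkov
    linarith [hp k]
  obtain ⟨z, hz⟩ := exists_forall_infHamming_add_lt hw (half_pos hδ) hε hS (by linarith) c
  refine ⟨z, fun k => ?_⟩
  have := (nonempty_of_flipAvg_indicator_pos ((half_pos hδ).trans_le (hS k 0))).to_subtype
  obtain ⟨⟨u, hu⟩, hlt⟩ := exists_lt_of_ciInf_lt (hz k)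
  refine ⟨(Finset.range a).piecewise (p k) u, fun i hi => ?_, hu, ?_⟩
  · exact Finset.piecewise_eq_of_mem _ _ _ (Finset.mem_range.2 hi)
  · rwa [hammingSum_congr (fun _ _ => rfl) fun i hi => ?_]
    exact Finset.piecewise_eq_of_notMem _ _ _ (by simpa using (Finset.mem_Ico.1 hi).1)

end Density

section Blocks

variable {f w : ℕ → ℝ}

theorem exists_seq_of_forall_exists_succ {β : Type*} {P : ℕ → β → Prop} {R : ℕ → β → β → Prop}
    (zero : ∃ b, P 0 b) (succ : ∀ n b, P n b → ∃ b', P (n + 1) b' ∧ R n b b') :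
    ∃ u : ℕ → β, ∀ n, P n (u n) ∧ R n (u n) (u (n + 1)) := by
  choose next hnext using fun n (b : {b // P n b}) => succ n b b.2
  let u (n : ℕ) : {b // P n b} :=
    n.rec ⟨zero.choose, zero.choose_spec⟩ fun n b => ⟨next n b, (hnext n b).1⟩
  exact ⟨fun n => (u n).1, fun n => ⟨(u n).2, (hnext n (u n)).2⟩⟩

theorem summable_sum_Ico_iff (hf : ∀ i, 0 ≤ f i) {a : ℕ → ℕ} (ha : StrictMono a) :
    Summable (fun n => ∑ i ∈ Finset.Ico (a n) (a (n + 1)), f i) ↔ Summable f := by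
  have hpartial (n : ℕ) : ∑ k ∈ Finset.range n, ∑ i ∈ Finset.Ico (a k) (a (k + 1)), f i =
      ∑ i ∈ Finset.range (a n), f i - ∑ i ∈ Finset.range (a 0), f i := by
    simp only [Finset.sum_Ico_eq_sub _ (ha.monotone (Nat.le_succ _))]
    exact Finset.sum_range_sub (fun k => ∑ i ∈ Finset.range (a k), f i) n
  constructor <;> intro h
  · refine summable_of_sum_range_le
      (c := ∑' n, (∑ i ∈ Finset.Ico (a n) (a (n + 1)), f i) + ∑ i ∈ Finset.range (a 0), f i)
      hf fun n => ?_
    have hblocks := h.sum_le_tsum (Finset.range n) fun k _ => Finset.sum_nonneg fun i _ => hf i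
    have hrange : ∑ i ∈ Finset.range n, f i ≤ ∑ i ∈ Finset.range (a n), f i :=
      Finset.sum_le_sum_of_subset_of_nonneg (Finset.range_mono ha.le_apply) fun i _ _ => hf i
    rw [hpartial] at hblocks
    linarith
  · refine summable_of_sum_range_le (c := ∑' i, f i)
      (fun n => Finset.sum_nonneg fun i _ => hf i) fun n => ?_
    rw [hpartial]
    exact (sub_le_self _ (Finset.sum_nonneg fun i _ => hf i)).trans
      (h.sum_le_tsum _ fun i _ => hf i)

theorem exists_abs_sum_Ico_sub_le (hw : ∀ i, 0 ≤ w i) (hsum : ¬ Summable w) {a : ℕ} {ρ : ℝ}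
    (hρ : ∀ i ≥ a, w i ≤ ρ) {v : ℝ} (hv : 0 ≤ v) :
    ∃ m ≥ a, |∑ i ∈ Finset.Ico a m, w i - v| ≤ ρ := by
  have hexceeds : ∃ b, v < ∑ i ∈ Finset.Ico a b, w i := by
    have htop := (not_summable_iff_tendsto_nat_atTop_of_nonneg hw).1 hsum
    obtain ⟨b, hb, hab⟩ := ((htop.eventually_gt_atTop (v + ∑ i ∈ Finset.range a, w i)).and
      (Filter.eventually_ge_atTop a)).exists
    exact ⟨b, by rw [Finset.sum_Ico_eq_sub _ hab]; linarith⟩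
  classical
  have hlt := Nat.find_spec hexceeds
  have hab : a < Nat.find hexceeds := by
    by_contra! hba
    rw [Finset.Ico_eq_empty_of_le hba, Finset.sum_empty] at hlt
    exact hv.not_gt hlt
  obtain ⟨m, hm⟩ := Nat.exists_eq_add_one_of_ne_zero (Nat.ne_zero_of_lt hab)
  rw [hm, Nat.lt_add_one_iff] at hab
  have hle := not_lt.1 (Nat.find_min hexceeds (m := m) (by lia))
  rw [hm, Finset.sum_Ico_succ_top hab] at hlt
  refine ⟨m, hab, ?_⟩
  rw [abs_le]
  constructor <;> linarith [hρ m hab]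

theorem eventually_forall_sum_Ico_lt (hf : Summable f) {r : ℝ} (hr : 0 < r) :
    ∀ᶠ a in Filter.atTop, ∀ b, ∑ i ∈ Finset.Ico a b, f i < r := by
  obtain ⟨s, hs⟩ := summable_iff_vanishing_norm.1 hf r hr
  obtain ⟨N, hN⟩ := s.exists_nat_subset_range
  filter_upwards [Filter.eventually_ge_atTop N] with a ha b
  refine (le_abs_self _).trans_lt (hs _ (Finset.disjoint_left.2 fun i hi his => ?_))
  have := Finset.mem_range.1 (hN his)
  have := Finset.mem_Ico.1 hi
  lia

theorem exists_blocks (hw : ∀ i, 0 ≤ w i) (hsum : ¬ Summable w)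
    (hsq : Summable fun i => w i ^ 2) {v : ℕ → ℝ} (hv : ∀ n, 0 ≤ v n) {ε r : ℕ → ℝ}
    (hε : ∀ n, 0 < ε n) (hr : ∀ n, 0 < r n) :
    ∃ a : ℕ → ℕ, ∃ T : ℕ → Finset ℕ, StrictMono a ∧ ∀ n,
      T n ⊆ Finset.Ico (a n) (a (n + 1)) ∧
      ∑ i ∈ Finset.Ico (a n) (a (n + 1)), w i ^ 2 < r n ∧ |∑ i ∈ T n, w i - v n| ≤ ε n := by
  have hfar (n m : ℕ) : ∃ a ≥ m,
      (∀ b, ∑ i ∈ Finset.Ico a b, w i ^ 2 < r n) ∧ ∀ i ≥ a, w i ≤ ε n := by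
    have hlight : ∀ᶠ i in Filter.atTop, w i ≤ ε n :=
      (hsq.tendsto_atTop_zero.eventually_lt_const (pow_pos (hε n) 2)).mono fun i hi =>
        (lt_of_pow_lt_pow_left₀ 2 (hε n).le hi).le
    exact ((Filter.eventually_ge_atTop m).and ((eventually_forall_sum_Ico_lt hsq (hr n)).and
      (Filter.eventually_forall_ge_atTop.2 hlight))).exists
  obtain ⟨a, ha⟩ := exists_seq_of_forall_exists_succ
    (P := fun n a => (∀ b, ∑ i ∈ Finset.Ico a b, w i ^ 2 < r n) ∧ ∀ i ≥ a, w i ≤ ε n)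
    (R := fun n a b => a < b ∧ ∃ T ⊆ Finset.Ico a b, |∑ i ∈ T, w i - v n| ≤ ε n)
    ((hfar 0 0).imp fun _ h => h.2) fun n a ⟨_, hlight⟩ => by
      obtain ⟨m, -, hm⟩ := exists_abs_sum_Ico_sub_le hw hsum hlight (hv n)
      obtain ⟨b, hb, hfarb⟩ := hfar (n + 1) (max m (a + 1))
      exact ⟨b, hfarb, le_of_max_le_right hb, Finset.Ico a m,
        Finset.Ico_subset_Ico_right (le_of_max_le_left hb), hm⟩
  choose T hT hTv using fun n => (ha n).2.2
  exact ⟨a, T, strictMono_nat_of_lt_succ fun n => (ha n).2.1, fun n =>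
    ⟨hT n, (ha n).1.1 _, hTv n⟩⟩

end Blocks

section Coding

variable {μ : Measure Cantor} {K : Set Cantor} {v w ε : ℕ → ℝ} {a : ℕ → ℕ} {c : ℕ → Cantor}
  {g : ℕ → Cantor → Cantor}

/-- Successive approximations to a continuous map: `g n` reads the first `n` bits of its input and
settles the first `a n` bits of the output, and the block `[a n, a (n + 1))` of output bits carries
`x n`, up to Hamming distance `ε n`, as the presence or absence of the pattern `c n` relative to a
word `z` common to all inputs. -/
structure IsCodingScheme (w : ℕ → ℝ) (a : ℕ → ℕ) (c : ℕ → Cantor) (ε : ℕ → ℝ)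
    (g : ℕ → Cantor → Cantor) : Prop where
  congr : ∀ n x, ∀ y ∈ PiNat.cylinder x n, g n y = g n x
  mem_cylinder : ∀ n x, g (n + 1) x ∈ PiNat.cylinder (g n x) (a n)
  exists_near : ∀ n, ∃ z, ∀ x,
    hammingSum w (Finset.Ico (a n) (a (n + 1))) (x n • c n + z) (g (n + 1) x) < ε n

/-- The limit of the approximations `g n`, whenever `g (i + 1)` settles the output bit `i`. -/
def diagonal (g : ℕ → Cantor → Cantor) (x : Cantor) : Cantor := fun i => g (i + 1) x i

theorem exists_refinement [IsFiniteMeasure μ] [μ.IsAddLeftInvariant] (hw : ∀ i, 0 ≤ w i)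
    {n a b : ℕ} (hab : a ≤ b) {δ ε : ℝ} (hδ : 0 < δ) (hε : 0 ≤ ε) {g : Cantor → Cantor}
    (hcongr : ∀ x, ∀ y ∈ PiNat.cylinder x n, g y = g x) (hdensity : ∀ x, δ ≤ density μ K (g x) a)
    (hsmall : ((2 : ℝ) ^ (n + 1)) ^ 2 * ∑ i ∈ Finset.Ico a b, w i ^ 2 < 2 * δ * ε ^ 2)
    (c : Cantor) :
    ∃ g' : Cantor → Cantor, (∀ x, ∀ y ∈ PiNat.cylinder x (n + 1), g' y = g' x) ∧
      (∀ x, δ / 2 ≤ density μ K (g' x) b) ∧ (∀ x, g' x ∈ PiNat.cylinder (g x) a) ∧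
      ∃ z, ∀ x, hammingSum w (Finset.Ico a b) (x n • c + z) (g' x) < ε := by
  let extend (t : Fin (n + 1) → ZMod 2) : Cantor := fun i => if h : i < n + 1 then t ⟨i, h⟩ else 0
  let restrict (x : Cantor) : Fin (n + 1) → ZMod 2 := fun i => x i
  have hextend (x : Cantor) : extend (restrict x) ∈ PiNat.cylinder x (n + 1) :=
    fun i hi => dif_pos hi
  obtain ⟨z, hz⟩ := exists_extensions_near hw hab hδ hε (fun t => hdensity (extend t))
    (by simpa [ZMod.card] using hsmall) fun t => extend t n • c
  choose q hqmem hqdensity hqnear using hz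
  refine ⟨fun x => q (restrict x), fun x y hy => ?_, fun x => hqdensity _, fun x => ?_, z,
    fun x => ?_⟩
  · exact congrArg q (funext fun i => hy i i.2)
  · rw [← hcongr x _ (PiNat.cylinder_anti x n.le_succ (hextend x))]
    exact hqmem _
  · rw [← hextend x n n.lt_succ_self]
    exact hqnear _

theorem exists_isCodingScheme [IsFiniteMeasure μ] [μ.IsAddLeftInvariant] (hw : ∀ i, 0 ≤ w i)
    (ha : Monotone a) (hε : ∀ n, 0 ≤ ε n) {δ : ℝ} (hδ : 0 < δ) (hK : δ ≤ density μ K 0 0)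
    (hsmall : ∀ n, ((2 : ℝ) ^ (n + 1)) ^ 2 * ∑ i ∈ Finset.Ico (a n) (a (n + 1)), w i ^ 2 <
      2 * (δ / 2 ^ n) * ε n ^ 2) (c : ℕ → Cantor) :
    ∃ g, IsCodingScheme w a c ε g ∧ ∀ n x, 0 < density μ K (g n x) (a n) := by
  obtain ⟨p, hp⟩ := exists_density_le (μ := μ) (K := K) (a 0).zero_le 0
  obtain ⟨g, hg⟩ := exists_seq_of_forall_exists_succ
    (P := fun n (g : Cantor → Cantor) => (∀ x, ∀ y ∈ PiNat.cylinder x n, g y = g x) ∧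
      ∀ x, δ / 2 ^ n ≤ density μ K (g x) (a n))
    (R := fun n g g' => (∀ x, g' x ∈ PiNat.cylinder (g x) (a n)) ∧
      ∃ z, ∀ x, hammingSum w (Finset.Ico (a n) (a (n + 1))) (x n • c n + z) (g' x) < ε n)
    ⟨fun _ => p, fun _ _ _ => rfl, fun _ => by simpa using hK.trans hp⟩
    fun n g ⟨hcongr, hdensity⟩ => by
      obtain ⟨g', hcongr', hdensity', hg'⟩ := exists_refinement hw (ha n.le_succ)
        (div_pos hδ (pow_pos two_pos n)) (hε n) hcongr hdensity (hsmall n) (c n)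
      exact ⟨g', ⟨hcongr', fun x => by simpa [pow_succ, div_div] using hdensity' x⟩, hg'⟩
  exact ⟨g, ⟨fun n => (hg n).1.1, fun n => (hg n).2.1, fun n => (hg n).2.2⟩, fun n x =>
    (div_pos hδ (pow_pos two_pos n)).trans_le ((hg n).1.2 x)⟩

namespace IsCodingScheme

theorem mem_cylinder_of_le (hg : IsCodingScheme w a c ε g) (ha : Monotone a) {m n : ℕ}
    (hmn : m ≤ n) (x : Cantor) : g n x ∈ PiNat.cylinder (g m x) (a m) := by
  induction n, hmn using Nat.le_induction with
  | base => exact PiNat.self_mem_cylinder _ _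
  | succ n hmn ih =>
    rw [← PiNat.mem_cylinder_iff_eq.1 ih]
    exact PiNat.cylinder_anti _ (ha hmn) (hg.mem_cylinder n x)

theorem diagonal_mem_cylinder (hg : IsCodingScheme w a c ε g) (ha : StrictMono a) (n : ℕ)
    (x : Cantor) : diagonal g x ∈ PiNat.cylinder (g n x) (a n) := by
  intro i hi
  rcases le_total n (i + 1) with hn | hn
  · exact hg.mem_cylinder_of_le ha.monotone hn x i hi
  · exact (hg.mem_cylinder_of_le ha.monotone hn x i ha.le_apply).symm

theorem continuous_diagonal (hg : IsCodingScheme w a c ε g) : Continuous (diagonal g) := by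
  refine continuous_pi fun i => IsLocallyConstant.continuous ?_
  refine (IsLocallyConstant.iff_exists_open _).2 fun x => ?_
  exact ⟨PiNat.cylinder x (i + 1), PiNat.isOpen_cylinder _ x _, PiNat.self_mem_cylinder x _,
    fun y hy => congrFun (hg.congr (i + 1) x y hy) i⟩

theorem diagonal_mem (hg : IsCodingScheme w a c ε g) (ha : StrictMono a) (hK : IsClosed K)
    (hdensity : ∀ n x, 0 < density μ K (g n x) (a n)) (x : Cantor) : diagonal g x ∈ K := by
  by_contra hx
  obtain ⟨n, hn⟩ := PiNat.exists_disjoint_cylinder hK hx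
  obtain ⟨y, hyK, hy⟩ := nonempty_of_density_pos (hdensity n x)
  rw [← PiNat.mem_cylinder_iff_eq.1 (hg.diagonal_mem_cylinder ha n x)] at hy
  exact Set.disjoint_left.1 hn hyK (PiNat.cylinder_anti _ ha.le_apply hy)

theorem abs_hammingSum_diagonal_sub_le (hg : IsCodingScheme w a c ε g) (hw : ∀ i, 0 ≤ w i)
    (ha : StrictMono a) {n : ℕ} {T : Finset ℕ} (hT : T ⊆ Finset.Ico (a n) (a (n + 1)))
    (hc : c n = (T : Set ℕ).indicator 1) (hv : |∑ i ∈ T, w i - v n| ≤ ε n) (x y : Cantor) :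
    |hammingSum w (Finset.Ico (a n) (a (n + 1))) (diagonal g x) (diagonal g y) -
      diffWeight v x y n| ≤ 3 * ε n := by
  obtain ⟨z, hz⟩ := hg.exists_near n
  set block := Finset.Ico (a n) (a (n + 1))
  have hdiag (x : Cantor) : ∀ i ∈ block, diagonal g x i = g (n + 1) x i := fun i hi =>
    hg.diagonal_mem_cylinder ha (n + 1) x i (Finset.mem_Ico.1 hi).2
  have hsettled : |hammingSum w block (diagonal g x) (diagonal g y) -
      hammingSum w block (x n • c n + z) (y n • c n + z)| ≤ ε n + ε n := by
    rw [hammingSum_congr (hdiag x) (hdiag y), abs_sub_comm]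
    exact (abs_hammingSum_sub_hammingSum_le hw _ _ _ _).trans (add_le_add (hz x).le (hz y).le)
  have hpattern : |hammingSum w block (x n • c n + z) (y n • c n + z) - diffWeight v x y n| ≤
      ε n := by
    rw [hc, hammingSum_smul_indicator_add hT, diffWeight]
    split_ifs
    · simpa using (abs_nonneg _).trans hv
    · exact hv
  calc _ ≤ (ε n + ε n) + ε n := (abs_sub_le _ _ _).trans (add_le_add hsettled hpattern)
    _ = 3 * ε n := by ring

end IsCodingScheme

end Coding

theorem ei_reducible_to_restriction_of_pos_measure_general {v w : ℕ → ℝ} (hv : ∀ n, 0 ≤ v n)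
    (hw : ∀ n, 0 ≤ w n) (hsum : ¬ Summable w) (hsq : Summable fun n => w n ^ 2)
    (μ : Measure Cantor) [IsFiniteMeasure μ] [μ.IsAddLeftInvariant] {A : Set Cantor}
    (hA : MeasurableSet A) (hpos : 0 < μ A) :
    ∃ g : Cantor → Cantor, Continuous g ∧ (∀ x, g x ∈ A) ∧
      ∀ x y : Cantor, SummableDiff v x y ↔ SummableDiff w (g x) (g y) := by
  obtain ⟨K, hKA, hK, hKpos⟩ :=
    MeasurableSet.exists_lt_isClosed_of_ne_top hA (measure_ne_top μ A) hpos
  let ε (n : ℕ) : ℝ := (1 / 2) ^ n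
  have hε (n : ℕ) : 0 < ε n := by positivity
  have hδ := density_zero_pos hKpos 0
  obtain ⟨a, T, ha, hblock⟩ := exists_blocks hw hsum hsq hv hε
    (r := fun n => 2 * (density μ K 0 0 / 2 ^ n) * ε n ^ 2 / (2 ^ (n + 1)) ^ 2)
    fun n => by have := hε n; positivity
  obtain ⟨g, hg, hdensity⟩ := exists_isCodingScheme hw ha.monotone (fun n => (hε n).le) hδ le_rfl
    (fun n => (lt_div_iff₀' (by positivity)).1 (hblock n).2.1)
    fun n => (T n : Set ℕ).indicator 1
  refine ⟨diagonal g, hg.continuous_diagonal, fun x => hKA (hg.diagonal_mem ha hK hdensity x),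
    fun x y => ?_⟩
  have herror : Summable fun n =>
      hammingSum w (Finset.Ico (a n) (a (n + 1))) (diagonal g x) (diagonal g y) -
        diffWeight v x y n :=
    .of_norm_bounded (summable_geometric_two.mul_left 3) fun n =>
      hg.abs_hammingSum_diagonal_sub_le hw ha (hblock n).1 rfl (hblock n).2.2 x y
  rw [SummableDiff, SummableDiff, ← summable_sum_Ico_iff (diffWeight_nonneg hw _ _) ha]
  exact ⟨fun h => (h.add herror).congr fun n => add_sub_cancel _ _,
    fun h => (h.sub herror).congr fun n => sub_sub_cancel _ _⟩

/-- For every Borel set `A ⊆ 2^ω` of positive Haar measure, `E_I` is (continuously, hence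
Borel) reducible to `E_I ↾ A`: there is a continuous `g : 2^ω → 2^ω` taking values in `A`
with `x E_I y ↔ g(x) E_I g(y)`. -/
theorem ei_reducible_to_restriction_of_pos_measure
    (μ : Measure Cantor) (hHaar : μ.IsAddHaarMeasure) (hprob : IsProbabilityMeasure μ)
    (A : Set Cantor) (hA : MeasurableSet A) (hpos : 0 < μ A) :
    ∃ g : Cantor → Cantor, Continuous g ∧ (∀ x, g x ∈ A) ∧
      (∀ x y : Cantor, EI x y ↔ EI (g x) (g y)) := by
  have hw (n : ℕ) : (0 : ℝ) ≤ 1 / ((n : ℝ) + 1) := by positivity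
  have hsum : ¬ Summable fun n : ℕ => 1 / ((n : ℝ) + 1) := by
    exact_mod_cast mt (summable_nat_add_iff 1).1 Real.not_summable_one_div_natCast
  have hsq : Summable fun n : ℕ => (1 / ((n : ℝ) + 1)) ^ 2 := by
    simpa [div_pow] using
      (summable_nat_add_iff 1).2 (Real.summable_one_div_nat_pow.2 one_lt_two)
  simpa only [ei_iff_summableDiff] using
    ei_reducible_to_restriction_of_pos_measure_general hw hw hsum hsq μ hA hpos
end

section
/- Let μ denote the Haar probability measure on 2^ω. For every closed set A ⊆ 2^ω with μ(A) > 0 there exist q_n ∈ ℕ and finite binary strings s_{n,i} (n ∈ ℕ, i ∈ {0,1}) and s_t (t ∈ 2^{<ω}) satisfying: (1) q_0 = 0 and, for every n, q_{n+1} equals the common length of s_t for t ∈ 2^n; (2) s_{0,0} = s_{0,1} = ∅ and, for n > 0, s_{n,0} and s_{n,1} have equal positive length; (3) s_∅ = ∅ and s_{t⌢i} = s_t ⌢ s_{lh(t)+1, i} for all t and i; (4) for every n, 1/(n+1) ≤ Σ_{k < lh(s_{n+1,0})} |s_{n+1,0}(k) − s_{n+1,1}(k)|/(q_{n+1}+k+1)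 ≤ 2/(n+1); (5) N_{s_t} ∩ A is nonempty and N_{s_t} ⊆ A is witnessed at the level of localizations, namely (6) for every t ∈ 2^n, μ(A_{(s_t)}) > 1 − 2^{−n}, where A_{(s)} = {x ∈ 2^ω : s⌢x ∈ A}. -/
/-!
A set of positive measure has localizations of measure arbitrarily close to `1`, at arbitrarily long
words: otherwise it would have density at most some `r < 1` in every long cylinder, hence in every
open superset, against outer regularity.

Given `B` of positive measure and a position `q`, choose `u` with `μ (B_(u)) > 1/2`. For the point
`z = 1^M 0^∞`, the set `C = B_(u) ∩ (z + B_(u))` has positive measure, so it has a localization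
`C_(v)` of measure close to `1` with `v` longer than `M`. If `w` is `v` with its first `M` letters
flipped, both `B_(u⌢v)` and `B_(u⌢w)` contain `C_(v)`, and `u⌢v`, `u⌢w` differ in a block of exactly
`M` consecutive positions. As the harmonic series diverges with terms at most `1 / (q + 1)`, `M` can
be chosen so as to bring the sum over this block to within a factor `2` of any `c ≥ 1 / (q + 1)`.

Iterating this with `B_{n+1} = ⋂ i, (B_n)_(s_{n+1,i})` controls all `t ∈ 2^n` at once, because
`B_n ⊆ A_(s_t)`; both localizations of `B_n` have measure more than `1/2`, so they meet in a set of
positive measure.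
-/

open MeasureTheory
open scoped ENNReal

/-- The basic clopen cylinder `N_s = {x ∈ 2^ω : s ⊆ x}`. -/
def cyl (s : List (ZMod 2)) : Set Cantor :=
  {x | ∀ i : ℕ, i < s.length → x i = s.getD i 0}

/-- Concatenation `s⌢x` of a finite string with an infinite sequence. -/
def concat (s : List (ZMod 2)) (x : Cantor) : Cantor :=
  fun n => if n < s.length then s.getD n 0 else x (n - s.length)

/-- The localization `A_{(s)} = {x ∈ 2^ω : s⌢x ∈ A}` of `A` at `s`. -/
def localization (A : Set Cantor) (s : List (ZMod 2)) : Set Cantor :=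
  {x | concat s x ∈ A}

section Strings

variable (s t : List (ZMod 2)) (x y : Cantor)

@[simp]
lemma concat_nil : concat [] x = x := by
  funext n
  simp [concat]

lemma concat_append : concat (s ++ t) x = concat s (concat t x) := by
  funext n
  simp only [concat, List.length_append]
  grind

lemma concat_map_add (i : ZMod 2) :
    concat (s.map (i + ·)) (x + y) = concat (List.replicate s.length i) x + concat s y := by
  funext n
  simp only [concat, Pi.add_apply]
  split_ifs <;> simp_all

lemma concat_map_add_append (i : ZMod 2) :
    concat (s.map (i + ·) ++ t) x = concat (List.replicate s.length i) 0 + concat (s ++ t) x := by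
  rw [concat_append, concat_append, ← concat_map_add, zero_add]

lemma concat_injective : Function.Injective (concat s) := by
  intro x y h
  funext n
  simpa [concat] using congrFun h (n + s.length)

lemma continuous_concat : Continuous (concat s) := by
  refine continuous_pi fun n => ?_
  by_cases h : n < s.length
  · simpa only [concat, h, if_true] using continuous_const
  · simpa only [concat, h, if_false] using continuous_apply _

lemma measurableEmbedding_concat : MeasurableEmbedding (concat s) :=
  ((continuous_concat s).isClosedEmbedding (concat_injective s)).measurableEmbedding

lemma concat_mem_cyl : concat s x ∈ cyl s := fun i hi => by simp only [concat, hi, if_true]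

lemma range_concat : Set.range (concat s) = cyl s := by
  refine Set.Subset.antisymm (Set.range_subset_iff.2 (concat_mem_cyl s)) fun x hx => ?_
  refine ⟨fun n => x (n + s.length), funext fun n => ?_⟩
  by_cases h : n < s.length
  · simp only [concat, h, if_true, hx n h]
  · simp only [concat, h, if_false, Nat.sub_add_cancel (not_lt.1 h)]

lemma measurableSet_cyl : MeasurableSet (cyl s) :=
  range_concat s ▸ (measurableEmbedding_concat s).measurableSet_range

lemma cyl_ofFn_eq_cylinder (n : ℕ) :
    cyl (List.ofFn fun i : Fin n => x i) = PiNat.cylinder x n := by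
  ext y
  simp +contextual [cyl, PiNat.mem_cylinder_iff]

end Strings

section Localization

variable {A B : Set Cantor}

@[simp]
lemma localization_nil : localization A [] = A := by
  simp [localization]

lemma localization_append (s t : List (ZMod 2)) :
    localization A (s ++ t) = localization (localization A s) t := by
  simp only [localization, concat_append, Set.mem_ofPred_eq]

lemma localization_mono (h : A ⊆ B) (s : List (ZMod 2)) : localization A s ⊆ localization B s :=
  Set.preimage_mono h

lemma measurableSet_localization (hA : MeasurableSet A) (s : List (ZMod 2)) :
    MeasurableSet (localization A s) :=
  (continuous_concat s).measurable hA

lemma image_concat_localization (A : Set Cantor) (s : List (ZMod 2)) :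
    concat s '' localization A s = A ∩ cyl s := by
  rw [← range_concat]
  exact Set.image_preimage_eq_inter_range

variable (μ : Measure Cantor) [μ.IsAddHaarMeasure]

lemma isAddLeftInvariant_comap_concat (s : List (ZMod 2)) :
    (μ.comap (concat s)).IsAddLeftInvariant := by
  refine (forall_measure_preimage_add_iff _).1 fun g E _ => ?_
  have concat_add (x : Cantor) :
      concat s (g + x) = concat (List.replicate s.length 0) g + concat s x := by
    simpa using concat_map_add s g x 0
  have image_preimage : concat s '' ((g + ·) ⁻¹' E) =
      (concat (List.replicate s.length 0) g + ·) ⁻¹' (concat s '' E) := by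
    ext y
    constructor
    · rintro ⟨x, hx, rfl⟩
      exact ⟨g + x, hx, concat_add x⟩
    · rintro ⟨x, hx, hxy⟩
      refine ⟨-g + x, by simpa using hx, ?_⟩
      rwa [← add_neg_cancel_left g x, concat_add, add_right_inj] at hxy
  rw [(measurableEmbedding_concat s).comap_apply, (measurableEmbedding_concat s).comap_apply,
    image_preimage, measure_preimage_add]

lemma measure_inter_cyl [IsProbabilityMeasure μ] (A : Set Cantor) (s : List (ZMod 2)) :
    μ (A ∩ cyl s) = μ (cyl s) * μ (localization A s) := by
  let ν := μ.comap (concat s)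
  have : ν.IsAddLeftInvariant := isAddLeftInvariant_comap_concat μ s
  have : IsFiniteMeasureOnCompacts ν :=
    .comap' μ (continuous_concat s) (measurableEmbedding_concat s)
  have hν_apply (E : Set Cantor) : ν E = μ (concat s '' E) :=
    (measurableEmbedding_concat s).comap_apply μ E
  have hν_eq : ν = ν Set.univ • μ := by
    have h := Measure.isAddInvariant_eq_smul_of_compactSpace ν μ
    have h_univ : ν Set.univ = Measure.addHaarScalarFactor ν μ := by
      conv_lhs => rw [h]
      simp
    rw [h_univ]
    exact h
  calc μ (A ∩ cyl s) = ν (localization A s) := by rw [hν_apply, image_concat_localization]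
    _ = ν Set.univ * μ (localization A s) := by conv_lhs => rw [hν_eq]; simp
    _ = μ (cyl s) * μ (localization A s) := by rw [hν_apply, Set.image_univ, range_concat]

end Localization

section Density

lemma measure_preimage_le_of_forall_measure_fiber_le {α β : Type*} [MeasurableSpace α]
    {ν κ : Measure α} {f : α → β} {s : Set β} (hs : s.Countable)
    (hf : ∀ b ∈ s, MeasurableSet (f ⁻¹' {b})) (h : ∀ b ∈ s, ν (f ⁻¹' {b}) ≤ κ (f ⁻¹' {b})) :
    ν (f ⁻¹' s) ≤ κ (f ⁻¹' s) := by
  rw [← tsum_measure_preimage_singleton hs hf, ← tsum_measure_preimage_singleton hs hf]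
  exact ENNReal.tsum_le_tsum fun b => h b b.2

lemma measure_le_of_forall_measure_cylinder_le {E : ℕ → Type*} [∀ n, Countable (E n)]
    [∀ n, TopologicalSpace (E n)] [∀ n, DiscreteTopology (E n)]
    [MeasurableSpace (∀ n, E n)] [OpensMeasurableSpace (∀ n, E n)] {ν κ : Measure (∀ n, E n)}
    {m : ℕ} (h : ∀ x, ∀ n ≥ m, ν (PiNat.cylinder x n) ≤ κ (PiNat.cylinder x n))
    {U : Set (∀ n, E n)} (hU : IsOpen U) : ν U ≤ κ U := by
  let V (n : ℕ) : Set (∀ n, E n) := {x | PiNat.cylinder x n ⊆ U}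
  have hV_mono : Monotone V := fun k n hkn x hx => (PiNat.cylinder_anti x hkn).trans hx
  have hV_sub (n : ℕ) : V n ⊆ U := fun x hx => hx (PiNat.self_mem_cylinder x n)
  have hV_union : U ⊆ ⋃ n, V n := by
    intro x hx
    obtain ⟨n, hn⟩ := PiNat.exists_disjoint_cylinder hU.isClosed_compl (not_not_intro hx)
    exact Set.mem_iUnion.2 ⟨n, Set.disjoint_compl_left_iff_subset.1 hn⟩
  have hV_le (n : ℕ) (hn : m ≤ n) : ν (V n) ≤ κ (V n) := by
    let π (x : ∀ n, E n) (i : Fin n) : E i := x i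
    have hπ (x : ∀ n, E n) : π ⁻¹' {π x} = PiNat.cylinder x n := by
      ext y
      simp [π, funext_iff, Fin.forall_iff]
    have hπV : π ⁻¹' (π '' V n) = V n := by
      refine Set.Subset.antisymm ?_ (Set.subset_preimage_image π (V n))
      rintro y ⟨x, hx, hxy⟩
      have hyx : y ∈ PiNat.cylinder x n := hπ x ▸ hxy.symm
      exact (PiNat.mem_cylinder_iff_eq.1 hyx).trans_subset hx
    have h_meas : ∀ a ∈ π '' V n, MeasurableSet (π ⁻¹' {a}) := by
      rintro _ ⟨x, -, rfl⟩
      exact hπ x ▸ (PiNat.isOpen_cylinder E x n).measurableSet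
    rw [← hπV]
    refine measure_preimage_le_of_forall_measure_fiber_le (Set.to_countable _) h_meas ?_
    rintro _ ⟨x, -, rfl⟩
    exact hπ x ▸ h x n hn
  calc ν U ≤ ⨆ n, ν (V n) := (measure_mono hV_union).trans_eq hV_mono.measure_iUnion
    _ ≤ κ U := iSup_le fun n =>
      calc ν (V n) ≤ ν (V (n + m)) := measure_mono (hV_mono (Nat.le_add_right n m))
        _ ≤ κ (V (n + m)) := hV_le _ (Nat.le_add_left m n)
        _ ≤ κ U := measure_mono (hV_sub _)

lemma exists_lt_measure_localization (μ : Measure Cantor) [μ.IsAddHaarMeasure]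
    [IsProbabilityMeasure μ] {A : Set Cantor} (hA : 0 < μ A) {r : ℝ≥0∞} (hr : r < 1) (m : ℕ) :
    ∃ s : List (ZMod 2), m ≤ s.length ∧ r < μ (localization A s) := by
  by_contra! h
  have h_cyl (s : List (ZMod 2)) (hs : m ≤ s.length) : μ.restrict A (cyl s) ≤ (r • μ) (cyl s) :=
    calc μ.restrict A (cyl s) = μ (cyl s) * μ (localization A s) := by
          rw [Measure.restrict_apply (measurableSet_cyl s), Set.inter_comm, measure_inter_cyl]
      _ ≤ μ (cyl s) * r := by gcongr; exact h s hs
      _ = (r • μ) (cyl s) := mul_comm _ _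
  have h_open (U : Set Cantor) (hU : IsOpen U) : μ.restrict A U ≤ r * μ U := by
    refine measure_le_of_forall_measure_cylinder_le (κ := r • μ) (m := m) (fun x n hn => ?_) hU
    rw [← cyl_ofFn_eq_cylinder]
    exact h_cyl _ (by simpa using hn)
  have lt_div_iff (a : ℝ≥0∞) (ha : a ≠ ∞) : a < μ A / r ↔ a * r < μ A :=
    ENNReal.lt_div_iff_mul_lt (.inr ha) (.inl hr.ne_top)
  have h_lt : μ A < μ A / r := by
    rw [lt_div_iff _ (measure_ne_top μ A)]
    simpa using ENNReal.mul_lt_mul_right hA.ne' (measure_ne_top μ A) hr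
  obtain ⟨U, hAU, hU, hμU⟩ := A.exists_isOpen_lt_of_lt _ h_lt
  refine (h_open U hU).not_gt ?_
  rw [Measure.restrict_apply hU.measurableSet, Set.inter_eq_right.2 hAU, mul_comm]
  exact (lt_div_iff _ (measure_ne_top μ U)).1 hμU

lemma measure_iInter_pos_of_one_sub_inv_card_lt {Ω ι : Type*} [MeasurableSpace Ω]
    [Fintype ι] [Nonempty ι] (μ : Measure Ω) [IsProbabilityMeasure μ] {s : ι → Set Ω}
    (hs : ∀ i, MeasurableSet (s i))
    (h : ∀ i, 1 - (Fintype.card ι : ℝ≥0∞)⁻¹ < μ (s i)) : 0 < μ (⋂ i, s i) := by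
  have h_compl : μ (⋂ i, s i)ᶜ < 1 :=
    calc μ (⋂ i, s i)ᶜ ≤ ∑ i, μ (s i)ᶜ := by
          rw [Set.compl_iInter]
          exact measure_iUnion_fintype_le _ _
      _ < ∑ _i : ι, (Fintype.card ι : ℝ≥0∞)⁻¹ := by
          refine ENNReal.sum_lt_sum_of_nonempty Finset.univ_nonempty fun i _ => ?_
          have h_card : (Fintype.card ι : ℝ≥0∞)⁻¹ ≤ 1 := by simp [Nat.one_le_iff_ne_zero]
          simpa [ENNReal.sub_sub_cancel ENNReal.one_ne_top h_card] using
            prob_compl_lt_one_sub_of_lt_prob (h i) (hs i)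
      _ = 1 := by simp [ENNReal.mul_inv_cancel]
  rw [prob_compl_eq_one_sub (.iInter hs)] at h_compl
  exact pos_iff_ne_zero.2 fun h_zero => by simp [h_zero] at h_compl

end Density

section HarmonicDist

/-- The distance between two words of equal length in condition (4): each index `k` at which they
differ contributes the harmonic weight `1 / (q + k + 1)`, where `q` is the position in `2^ω` at
which the words are placed. Words are compared along the length of the first one. -/
noncomputable def harmonicDist (q : ℕ) (s t : List (ZMod 2)) : ℝ :=
  ∑ k ∈ Finset.range s.length,
    if s.getD k 0 = t.getD k 0 then 0 else 1 / ((q : ℝ) + k + 1)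

variable (q : ℕ) (s : List (ZMod 2))

@[simp]
lemma harmonicDist_self : harmonicDist q s s = 0 := by
  simp [harmonicDist]

lemma harmonicDist_append {s s' : List (ZMod 2)} (h : s.length = s'.length)
    (t t' : List (ZMod 2)) : harmonicDist q (s ++ t) (s' ++ t') =
      harmonicDist q s s' + harmonicDist (q + s.length) t t' := by
  rw [harmonicDist, List.length_append, Finset.sum_range_add]
  congr 1
  · refine Finset.sum_congr rfl fun k hk => ?_
    have hk : k < s.length := Finset.mem_range.1 hk
    rw [List.getD_append _ _ _ _ hk, List.getD_append _ _ _ _ (h ▸ hk)]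
  · refine Finset.sum_congr rfl fun k _ => ?_
    rw [List.getD_append_right _ _ _ _ (by omega), List.getD_append_right _ _ _ _ (by omega), ← h,
      Nat.add_sub_cancel_left]
    simp only [Nat.cast_add, add_assoc]

lemma harmonicDist_map_add {i j : ZMod 2} (hij : i ≠ j) :
    harmonicDist q (s.map (i + ·)) (s.map (j + ·)) =
      ∑ k ∈ Finset.range s.length, 1 / ((q : ℝ) + k + 1) := by
  rw [harmonicDist, List.length_map]
  refine Finset.sum_congr rfl fun k hk => if_neg ?_
  simpa [Finset.mem_range.1 hk] using hij

lemma exists_sum_range_mem_Icc {f : ℕ → ℝ} {c d : ℝ}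
    (hf : Filter.Tendsto (fun n => ∑ k ∈ Finset.range n, f k) Filter.atTop Filter.atTop)
    (hc : 0 < c) (hd : ∀ k, f k ≤ d) : ∃ n, ∑ k ∈ Finset.range n, f k ∈ Set.Icc c (c + d) := by
  classical
  have h_ex : ∃ n, c ≤ ∑ k ∈ Finset.range n, f k := (hf.eventually_ge_atTop c).exists
  refine ⟨Nat.find h_ex, Nat.find_spec h_ex, ?_⟩
  obtain ⟨n, hn⟩ : ∃ n, Nat.find h_ex = n + 1 :=
    Nat.exists_eq_succ_of_ne_zero fun h_zero => by
      simpa [h_zero] using hc.trans_le (Nat.find_spec h_ex)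
  have h_lt : ∑ k ∈ Finset.range n, f k < c := not_le.1 (Nat.find_min h_ex (by omega))
  rw [hn, Finset.sum_range_succ]
  exact add_le_add h_lt.le (hd n)

lemma tendsto_sum_range_one_div_add_atTop :
    Filter.Tendsto (fun n => ∑ k ∈ Finset.range n, 1 / ((q : ℝ) + k + 1))
      Filter.atTop Filter.atTop := by
  rw [← not_summable_iff_tendsto_nat_atTop_of_nonneg fun k => by positivity]
  refine fun h => Real.not_summable_one_div_natCast ((summable_nat_add_iff (q + 1)).1 ?_)
  refine h.congr fun k => ?_
  push_cast
  ring

end HarmonicDist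

section Splitting

/-- One step of the construction: a pair of words `g 0`, `g 1` to be placed at position `q`, far
enough apart for condition (4) when `c = 1 / (n + 1)`, at both of which `B` has a localization large
enough for condition (6). -/
structure IsSplitting (μ : Measure Cantor) (B : Set Cantor) (q : ℕ) (r : ℝ≥0∞) (c : ℝ)
    (g : ZMod 2 → List (ZMod 2)) : Prop where
  length_eq (i j : ZMod 2) : (g i).length = (g j).length
  length_pos (i : ZMod 2) : 0 < (g i).length
  lt_measure (i : ZMod 2) : r < μ (localization B (g i))
  harmonicDist_mem : harmonicDist q (g 0) (g 1) ∈ Set.Icc c (2 * c)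

lemma IsSplitting.measure_iInter_localization_pos {μ : Measure Cantor} [IsProbabilityMeasure μ]
    {B : Set Cantor} {q : ℕ} {r : ℝ≥0∞} {c : ℝ} {g : ZMod 2 → List (ZMod 2)}
    (hg : IsSplitting μ B q r c g) (hB : MeasurableSet B) (hr : 2⁻¹ ≤ r) :
    0 < μ (⋂ i, localization B (g i)) :=
  measure_iInter_pos_of_one_sub_inv_card_lt μ (fun i => measurableSet_localization hB (g i))
    fun i => by simpa using hr.trans_lt (hg.lt_measure i)

variable (μ : Measure Cantor) [μ.IsAddHaarMeasure] [IsProbabilityMeasure μ] {A B : Set Cantor}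

lemma exists_isSplitting (hB : MeasurableSet B) (hμB : 0 < μ B) (q : ℕ) {r : ℝ≥0∞} (hr : r < 1)
    {c : ℝ} (hc : 0 < c) (hqc : 1 / ((q : ℝ) + 1) ≤ c) : ∃ g, IsSplitting μ B q r c g := by
  obtain ⟨u, -, hu⟩ := exists_lt_measure_localization μ hμB ENNReal.one_half_lt_one 0
  obtain ⟨M, hM⟩ : ∃ M, ∑ k ∈ Finset.range M, 1 / (((q + u.length : ℕ) : ℝ) + k + 1) ∈
      Set.Icc c (c + c) := by
    refine exists_sum_range_mem_Icc (tendsto_sum_range_one_div_add_atTop _) hc fun k => ?_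
    refine (one_div_le_one_div_of_le (by positivity) ?_).trans hqc
    push_cast
    linarith [u.length.cast_nonneg (α := ℝ), k.cast_nonneg (α := ℝ)]
  let z (i : ZMod 2) : Cantor := concat (List.replicate M i) 0
  let C : Set Cantor := ⋂ i, (z i + ·) ⁻¹' localization B u
  have hC : 0 < μ C := by
    refine measure_iInter_pos_of_one_sub_inv_card_lt μ (fun i => ?_) fun i => ?_
    · exact measurable_const_add (z i) (measurableSet_localization hB u)
    · simpa [measure_preimage_add] using hu
  obtain ⟨v, hv, hrv⟩ := exists_lt_measure_localization μ hC hr (M + 1)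
  obtain ⟨p, d, rfl, hp⟩ : ∃ p d, v = p ++ d ∧ p.length = M :=
    ⟨v.take M, v.drop M, (List.take_append_drop M v).symm, List.length_take_of_le (by omega)⟩
  have h_flip (i : ZMod 2) (x : Cantor) :
      concat (p.map (i + ·) ++ d) x = z i + concat (p ++ d) x := by
    rw [concat_map_add_append, hp]
  refine ⟨fun i => u ++ (p.map (i + ·) ++ d), ?_, ?_, ?_, ?_⟩
  · simp
  · intro i
    simp only [List.length_append, List.length_map] at hv ⊢
    omega
  · intro i
    refine hrv.trans_le (measure_mono fun x hx => ?_)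
    have hx_flip : concat (p.map (i + ·) ++ d) x ∈ localization B u :=
      h_flip i x ▸ Set.mem_iInter.1 hx i
    rwa [localization_append]
  · rw [harmonicDist_append _ rfl, harmonicDist_append _ (by simp),
      harmonicDist_map_add _ _ zero_ne_one, harmonicDist_self, harmonicDist_self, zero_add,
      add_zero, hp, two_mul]
    exact hM

/-- The data of the inductive construction: `B n` is a measurable subset of every localization
`A_{(s_t)}` with `t ∈ 2^n`, `q n` is the common length of the words `s_t`, and the words `g n i` are
the `s_{n + 1, i}` of the scheme. -/
structure IsSplittingSeq (μ : Measure Cantor) (A : Set Cantor) (B : ℕ → Set Cantor) (q : ℕ → ℕ)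
    (g : ℕ → ZMod 2 → List (ZMod 2)) : Prop where
  zero_subset : B 0 ⊆ A
  zero_eq : q 0 = 0
  succ_subset (n : ℕ) (i : ZMod 2) : B (n + 1) ⊆ localization (B n) (g n i)
  succ_eq (n : ℕ) : q (n + 1) = q n + (g n 0).length
  isSplitting (n : ℕ) : IsSplitting μ (B n) (q n) (1 - (1 / 2) ^ (n + 1)) (1 / (n + 1)) (g n)

lemma exists_isSplittingSeq (hA : NullMeasurableSet A μ) (hμA : 0 < μ A) :
    ∃ B q g, IsSplittingSeq μ A B q g := by
  obtain ⟨A', hA'A, hA', hA'_eq⟩ := hA.exists_measurable_subset_ae_eq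
  have h_step (n : ℕ) (B : Set Cantor) (q : ℕ) (hB : MeasurableSet B) (hμB : 0 < μ B)
      (hq : n ≤ q) : ∃ g, IsSplitting μ B q (1 - (1 / 2) ^ (n + 1)) (1 / (n + 1)) g :=
    exists_isSplitting μ hB hμB q (ENNReal.sub_lt_self (by simp) (by simp) (by simp))
      (by positivity) (by gcongr)
  choose! G hG using h_step
  let S (n : ℕ) : Set Cantor × ℕ := n.rec (A', 0) fun n S =>
    (⋂ i, localization S.1 (G n S.1 S.2 i), S.2 + (G n S.1 S.2 0).length)
  have half_le (n : ℕ) : (2⁻¹ : ℝ≥0∞) ≤ 1 - (1 / 2) ^ (n + 1) := by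
    rw [← ENNReal.one_sub_inv_two, one_div]
    exact tsub_le_tsub_left (pow_le_of_le_one (by simp) (by simp) n.succ_ne_zero) 1
  have hS (n : ℕ) : MeasurableSet (S n).1 ∧ 0 < μ (S n).1 ∧ n ≤ (S n).2 := by
    induction n with
    | zero => exact ⟨hA', hμA.trans_eq (measure_congr hA'_eq).symm, le_rfl⟩
    | succ n ih =>
      obtain ⟨h_meas, h_pos, h_le⟩ := ih
      have h := hG n _ _ h_meas h_pos h_le
      exact ⟨.iInter fun i => measurableSet_localization h_meas _,
        h.measure_iInter_localization_pos h_meas (half_le n),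
        Nat.add_le_add h_le (h.length_pos 0)⟩
  exact ⟨fun n => (S n).1, fun n => (S n).2, fun n => G n (S n).1 (S n).2, hA'A, rfl,
    fun n i => Set.iInter_subset _ i, fun n => rfl,
    fun n => hG n _ _ (hS n).1 (hS n).2.1 (hS n).2.2⟩

end Splitting

section Scheme

/-- The word `s_t` of a scheme, that is `g 0 (t 0) ⌢ g 1 (t 1) ⌢ ⋯` along the letters of `t`. Here
`g n i` stands for `s_{n + 1, i}`. -/
def schemeWord (g : ℕ → ZMod 2 → List (ZMod 2)) (t : List (ZMod 2)) : List (ZMod 2) :=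
  (t.mapIdx g).flatten

@[simp]
lemma schemeWord_nil (g : ℕ → ZMod 2 → List (ZMod 2)) : schemeWord g [] = [] := rfl

lemma schemeWord_concat (g : ℕ → ZMod 2 → List (ZMod 2)) (t : List (ZMod 2)) (i : ZMod 2) :
    schemeWord g (t ++ [i]) = schemeWord g t ++ g t.length i := by
  simp [schemeWord]

namespace IsSplittingSeq

variable {μ : Measure Cantor} {A : Set Cantor} {B : ℕ → Set Cantor} {q : ℕ → ℕ}
  {g : ℕ → ZMod 2 → List (ZMod 2)}

lemma length_schemeWord (h : IsSplittingSeq μ A B q g) (t : List (ZMod 2)) :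
    (schemeWord g t).length = q t.length := by
  induction t using List.reverseRecOn with
  | nil => exact h.zero_eq.symm
  | append_singleton t i ih =>
    simp [schemeWord_concat, ih, h.succ_eq, (h.isSplitting t.length).length_eq i 0]

lemma subset_localization_schemeWord (h : IsSplittingSeq μ A B q g) (t : List (ZMod 2)) :
    B t.length ⊆ localization A (schemeWord g t) := by
  induction t using List.reverseRecOn with
  | nil => simpa using h.zero_subset
  | append_singleton t i ih =>
    rw [schemeWord_concat, localization_append, List.length_append]
    exact (h.succ_subset t.length i).trans (localization_mono ih _)

lemma lt_measure_localization_schemeWord (h : IsSplittingSeq μ A B q g) (hμA : 0 < μ A)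
    (t : List (ZMod 2)) : 1 - (1 / 2) ^ t.length < μ (localization A (schemeWord g t)) := by
  induction t using List.reverseRecOn with
  | nil => simpa using hμA
  | append_singleton t i _ =>
    rw [schemeWord_concat, localization_append, List.length_append]
    exact ((h.isSplitting t.length).lt_measure i).trans_le
      (measure_mono (localization_mono (h.subset_localization_schemeWord t) _))

end IsSplittingSeq

lemma cyl_inter_nonempty {A : Set Cantor} {s : List (ZMod 2)}
    (h : (localization A s).Nonempty) : (cyl s ∩ A).Nonempty :=
  let ⟨x, hx⟩ := h
  ⟨concat s x, concat_mem_cyl s x, hx⟩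

end Scheme

theorem exists_scheme_of_closed_pos_measure_general
    (μ : Measure Cantor) [μ.IsAddHaarMeasure] [IsProbabilityMeasure μ]
    {A : Set Cantor} (hA : NullMeasurableSet A μ) (hpos : 0 < μ A) :
    ∃ (q : ℕ → ℕ) (s2 : ℕ → ZMod 2 → List (ZMod 2)) (st : List (ZMod 2) → List (ZMod 2)),
      q 0 = 0 ∧
      (∀ n : ℕ, ∀ t : List (ZMod 2), t.length = n → q (n + 1) = (st t).length) ∧
      (s2 0 0 = [] ∧ s2 0 1 = []) ∧
      (∀ n : ℕ, 0 < n → (s2 n 0).length = (s2 n 1).length ∧ 0 < (s2 n 0).length) ∧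
      st [] = [] ∧
      (∀ (t : List (ZMod 2)) (i : ZMod 2), st (t ++ [i]) = st t ++ s2 (t.length + 1) i) ∧
      (∀ n : ℕ, 1 / (n + 1) ≤ harmonicDist (q (n + 1)) (s2 (n + 1) 0) (s2 (n + 1) 1) ∧
        harmonicDist (q (n + 1)) (s2 (n + 1) 0) (s2 (n + 1) 1) ≤ 2 / (n + 1)) ∧
      (∀ t : List (ZMod 2), (cyl (st t) ∩ A).Nonempty) ∧
      (∀ n : ℕ, ∀ t : List (ZMod 2), t.length = n →
        μ (localization A (st t)) > 1 - (1 / 2) ^ n) := by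
  obtain ⟨B, q, g, h⟩ := exists_isSplittingSeq μ hA hpos
  have h_lt := h.lt_measure_localization_schemeWord hpos
  refine ⟨fun n => q (n - 1), fun n i => n.casesOn [] fun m => g m i, schemeWord g, h.zero_eq,
    ?_, ⟨rfl, rfl⟩, ?_, rfl, schemeWord_concat g, ?_, ?_, ?_⟩
  · rintro n t rfl
    exact (h.length_schemeWord t).symm
  · rintro (_ | n) hn
    · exact absurd hn (lt_irrefl 0)
    · exact ⟨(h.isSplitting n).length_eq 0 1, (h.isSplitting n).length_pos 0⟩
  · intro n
    simpa [div_eq_mul_inv] using (h.isSplitting n).harmonicDist_mem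
  · exact fun t => cyl_inter_nonempty (nonempty_of_measure_ne_zero (h_lt t).ne_bot)
  · rintro n t rfl
    exact h_lt t

/-- for every closed `A ⊆ 2^ω` of positive Haar measure there is a scheme
`q_n`, `s_{n,i}`, `s_t` satisfying conditions (1)–(6). -/
theorem exists_scheme_of_closed_pos_measure
    (μ : Measure Cantor) (hHaar : μ.IsAddHaarMeasure) (hprob : IsProbabilityMeasure μ)
    (A : Set Cantor) (hA : IsClosed A) (hpos : 0 < μ A) :
    ∃ (q : ℕ → ℕ) (s2 : ℕ → ZMod 2 → List (ZMod 2)) (st : List (ZMod 2) → List (ZMod 2)),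
      -- (1)
      q 0 = 0 ∧
      (∀ n : ℕ, ∀ t : List (ZMod 2), t.length = n → q (n + 1) = (st t).length) ∧
      -- (2)
      (s2 0 0 = [] ∧ s2 0 1 = []) ∧
      (∀ n : ℕ, 0 < n → (s2 n 0).length = (s2 n 1).length ∧ 0 < (s2 n 0).length) ∧
      -- (3)
      st [] = [] ∧
      (∀ (t : List (ZMod 2)) (i : ZMod 2), st (t ++ [i]) = st t ++ s2 (t.length + 1) i) ∧
      -- (4)
      (∀ n : ℕ,
        (1 : ℝ) / (n + 1) ≤
          (∑ k ∈ Finset.range (s2 (n + 1) 0).length,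
            if (s2 (n + 1) 0).getD k 0 = (s2 (n + 1) 1).getD k 0 then (0 : ℝ)
            else 1 / ((q (n + 1) : ℝ) + (k : ℝ) + 1)) ∧
        (∑ k ∈ Finset.range (s2 (n + 1) 0).length,
            if (s2 (n + 1) 0).getD k 0 = (s2 (n + 1) 1).getD k 0 then (0 : ℝ)
            else 1 / ((q (n + 1) : ℝ) + (k : ℝ) + 1)) ≤ 2 / (n + 1)) ∧
      -- (5)
      (∀ t : List (ZMod 2), (cyl (st t) ∩ A).Nonempty) ∧
      -- (6)
      (∀ n : ℕ, ∀ t : List (ZMod 2), t.length = n →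
        μ (localization A (st t)) > 1 - (1 / 2) ^ n) :=
  exists_scheme_of_closed_pos_measure_general μ hA.measurableSet.nullMeasurableSet hpos
end

section
/- Let μ denote the Haar probability measure on 2^ω. For every Borel set B ⊆ 2^ω with μ(B) > 0, every q ∈ ℕ and every real c > 0, there exist x₀, x₁ ∈ B such that c ≤ Σ_{k=0}^∞ |x₀(k) − x₁(k)|/(q+k+1) ≤ 2c. -/
open MeasureTheory
open scoped ENNReal

/-!
By Steinhaus, `B - B` is a neighbourhood of `0`, so it contains every point vanishing on some
finite set `F` of coordinates; enlarge `F` so that all weights outside it are at most `c`. Since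
the harmonic series diverges, some finite set of coordinates outside `F` has total weight at least
`c`, and removing coordinates one at a time leaves a set `S` with total weight in `[c, 2c]`. A
point of `B - B` with support `S` is the difference of the desired pair.
-/

open Filter Topology
open scoped Pointwise

section WeightedSums

variable {ι : Type*}

theorem exists_subset_le_sum_le_add {M : Type*} [AddCommMonoid M] [LinearOrder M]
    [IsOrderedAddMonoid M] {w : ι → M} {a d : M} (had : 0 ≤ a + d) {T : Finset ι}
    (hw : ∀ i ∈ T, w i ≤ d) (ha : a ≤ ∑ i ∈ T, w i) :
    ∃ S ⊆ T, a ≤ ∑ i ∈ S, w i ∧ ∑ i ∈ S, w i ≤ a + d := by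
  classical
  induction T using Finset.induction with
  | empty => exact ⟨∅, subset_rfl, ha, by simpa only [Finset.sum_empty] using had⟩
  | insert j T hj ih =>
    rcases le_total a (∑ i ∈ T, w i) with hT | hT
    · obtain ⟨S, hST, hS⟩ := ih (fun i hi => hw i (Finset.mem_insert_of_mem hi)) hT
      exact ⟨S, hST.trans (Finset.subset_insert j T), hS⟩
    · refine ⟨insert j T, subset_rfl, ha, ?_⟩
      rw [Finset.sum_insert hj, add_comm]
      exact add_le_add hT (hw j (Finset.mem_insert_self j T))

variable {w : ι → ℝ≥0∞}

theorem exists_finset_disjoint_lt_sum (hfin : ∀ i, w i ≠ ∞) (hsum : ∑' i, w i = ∞)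
    (F : Finset ι) {a : ℝ≥0∞} (ha : a ≠ ∞) :
    ∃ T : Finset ι, Disjoint F T ∧ a < ∑ i ∈ T, w i := by
  classical
  have hF : ∑ i ∈ F, w i ≠ ∞ := ENNReal.sum_ne_top.2 fun i _ => hfin i
  obtain ⟨T, hT⟩ : ∃ T : Finset ι, a + ∑ i ∈ F, w i < ∑ i ∈ T, w i := by
    rw [← lt_iSup_iff, ← ENNReal.tsum_eq_iSup_sum, hsum]
    exact (ENNReal.add_ne_top.2 ⟨ha, hF⟩).lt_top
  refine ⟨T \ F, Finset.disjoint_sdiff, (ENNReal.add_lt_add_iff_right hF).1 ?_⟩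
  calc a + ∑ i ∈ F, w i < ∑ i ∈ T, w i := hT
    _ ≤ ∑ i ∈ T ∪ F, w i := Finset.sum_le_sum_of_subset Finset.subset_union_left
    _ = ∑ i ∈ T \ F, w i + ∑ i ∈ F, w i := by
      rw [← Finset.sdiff_union_self_eq_union, Finset.sum_union Finset.sdiff_disjoint]

theorem exists_finset_disjoint_sum_mem_Icc (hfin : ∀ i, w i ≠ ∞) (hsum : ∑' i, w i = ∞)
    (hlim : Tendsto w cofinite (𝓝 0)) (F : Finset ι) {a b : ℝ≥0∞} (hab : a < b) :
    ∃ S : Finset ι, Disjoint F S ∧ ∑ i ∈ S, w i ∈ Set.Icc a b := by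
  classical
  have hlarge : {i | ¬ w i ≤ b - a}.Finite :=
    eventually_cofinite.1 (hlim.eventually_le_const (tsub_pos_of_lt hab))
  obtain ⟨T, hT, haT⟩ :=
    exists_finset_disjoint_lt_sum hfin hsum (F ∪ hlarge.toFinset) hab.ne_top
  rw [Finset.disjoint_union_left] at hT
  have hsmall : ∀ i ∈ T, w i ≤ b - a := fun i hi => by
    simpa using Finset.disjoint_right.1 hT.2 hi
  obtain ⟨S, hST, haS, hSb⟩ := exists_subset_le_sum_le_add zero_le hsmall haT.le
  exact ⟨S, hT.1.mono_right hST, haS, hSb.trans_eq (add_tsub_cancel_of_le hab.le)⟩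

end WeightedSums

section HarmonicWeights

variable (q : ℕ)

theorem tsum_one_div_natCast_add_natCast_add_one_eq_top :
    ∑' k : ℕ, 1 / ((q : ℝ≥0∞) + (k : ℝ≥0∞) + 1) = ∞ := by
  have hdiv : ¬ Summable fun k : ℕ => 1 / ((k + (q + 1) : ℕ) : ℝ) :=
    (summable_nat_add_iff (q + 1)).not.2 Real.not_summable_one_div_natCast
  by_contra hfin
  refine hdiv ((ENNReal.summable_toReal hfin).congr fun k => ?_)
  have hcast : (q : ℝ≥0∞) + (k : ℝ≥0∞) + 1 = ((k + (q + 1) : ℕ) : ℝ≥0∞) := by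
    push_cast
    ring
  rw [hcast, ENNReal.toReal_div, ENNReal.toReal_one, ENNReal.toReal_natCast]

theorem tendsto_one_div_natCast_add_natCast_add_one :
    Tendsto (fun k : ℕ => 1 / ((q : ℝ≥0∞) + (k : ℝ≥0∞) + 1)) cofinite (𝓝 0) := by
  rw [Nat.cofinite_eq_atTop]
  refine (ENNReal.tendsto_inv_nat_nhds_zero.comp (tendsto_add_atTop_nat (q + 1))).congr
    fun k => ?_
  simp only [Function.comp_apply, one_div]
  push_cast
  ring_nf

end HarmonicWeights

theorem exists_pair_setOf_ne_eq_of_sub_mem_nhds_zero {ι : Type*} {G : ι → Type*}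
    [∀ i, AddGroup (G i)] [∀ i, TopologicalSpace (G i)] [∀ i, Nontrivial (G i)]
    {B : Set (∀ i, G i)} (hB : B - B ∈ 𝓝 0) :
    ∃ F : Finset ι, ∀ S : Set ι, Disjoint (F : Set ι) S →
      ∃ x ∈ B, ∃ y ∈ B, {i | x i ≠ y i} = S := by
  classical
  rw [nhds_pi, mem_pi'] at hB
  obtain ⟨F, U, hU, hUB⟩ := hB
  choose g hg using fun i => exists_ne (0 : G i)
  refine ⟨F, fun S hFS => ?_⟩
  let z : ∀ i, G i := S.piecewise g 0
  have hz : z ∈ B - B := hUB fun i hi => by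
    simpa only [z, Set.piecewise_eq_of_notMem S g 0 (Set.disjoint_left.1 hFS hi)]
      using mem_of_mem_nhds (hU i)
  obtain ⟨x, hx, y, hy, hxy⟩ := Set.mem_sub.1 hz
  refine ⟨x, hx, y, hy, Set.ext fun i => ?_⟩
  rw [Set.mem_ofPred_eq, ← sub_ne_zero, ← Pi.sub_apply, hxy]
  by_cases hi : i ∈ S <;> simp [z, hi, hg]

theorem exists_pair_in_pos_measure_with_sum_between_general {ι : Type*} {G : ι → Type*}
    [∀ i, AddGroup (G i)] [∀ i, TopologicalSpace (G i)] [∀ i, IsTopologicalAddGroup (G i)]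
    [∀ i, Nontrivial (G i)] [∀ i, DecidableEq (G i)] [LocallyCompactSpace (∀ i, G i)]
    [MeasurableSpace (∀ i, G i)] [BorelSpace (∀ i, G i)]
    (μ : Measure (∀ i, G i)) [μ.IsAddHaarMeasure] [μ.InnerRegular]
    {B : Set (∀ i, G i)} (hB : MeasurableSet B) (hpos : 0 < μ B)
    {w : ι → ℝ≥0∞} (hfin : ∀ i, w i ≠ ∞) (hsum : ∑' i, w i = ∞)
    (hlim : Tendsto w cofinite (𝓝 0)) {a b : ℝ≥0∞} (hab : a < b) :
    ∃ x ∈ B, ∃ y ∈ B, (∑' i, if x i = y i then 0 else w i) ∈ Set.Icc a b := by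
  obtain ⟨F, hF⟩ := exists_pair_setOf_ne_eq_of_sub_mem_nhds_zero
    (Measure.sub_mem_nhds_zero_of_addHaar_pos μ B hB hpos)
  obtain ⟨S, hFS, hS⟩ := exists_finset_disjoint_sum_mem_Icc hfin hsum hlim F hab
  obtain ⟨x, hx, y, hy, hxy⟩ := hF S (Finset.disjoint_coe.2 hFS)
  have hmem (i : ι) : i ∈ S ↔ x i ≠ y i := by
    rw [← Finset.mem_coe, ← hxy, Set.mem_ofPred_eq]
  refine ⟨x, hx, y, hy, ?_⟩
  rwa [tsum_eq_sum fun i hi => if_pos (not_not.1 (mt (hmem i).2 hi)),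
    Finset.sum_congr rfl fun i hi => if_neg ((hmem i).1 hi)]

/-- for every Borel `B ⊆ 2^ω` of positive Haar measure, every `q ∈ ℕ` and
every real `c > 0` there are `x₀, x₁ ∈ B` with
`c ≤ Σ_k |x₀(k) - x₁(k)|/(q+k+1) ≤ 2c` (the sum computed in `[0,∞]`). -/
theorem exists_pair_in_pos_measure_with_sum_between
    (μ : Measure Cantor) (hHaar : μ.IsAddHaarMeasure) (hprob : IsProbabilityMeasure μ)
    (B : Set Cantor) (hB : MeasurableSet B) (hpos : 0 < μ B) (q : ℕ) (c : ℝ) (hc : 0 < c) :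
    ∃ x₀ ∈ B, ∃ x₁ ∈ B,
      ENNReal.ofReal c ≤
        (∑' k : ℕ, if x₀ k = x₁ k then 0 else 1 / ((q : ℝ≥0∞) + (k : ℝ≥0∞) + 1)) ∧
      (∑' k : ℕ, if x₀ k = x₁ k then 0 else 1 / ((q : ℝ≥0∞) + (k : ℝ≥0∞) + 1)) ≤
        ENNReal.ofReal (2 * c) :=
  exists_pair_in_pos_measure_with_sum_between_general μ hB hpos (by simp)
    (tsum_one_div_natCast_add_natCast_add_one_eq_top q)
    (tendsto_one_div_natCast_add_natCast_add_one q)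
    ((ENNReal.ofReal_lt_ofReal_iff (by positivity)).2 (by linarith))
end
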